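/- Let p ∈ [2,∞) and ε ∈ (0,2]. Then inf { 1 − ‖(f+g)/2‖_p : f, g ∈ L^p([0,1]), ‖f‖_p = ‖g‖_p = 1, ‖f−g‖_p ≥ ε } = 1 − (1 − (ε/2)^p)^{1/p}. That is, the modulus of uniform convexity of L^p([0,1]) for p ≥ 2 equals δ_{L^p}(ε) = 1 − (1 − (ε/2)^p)^{1/p}. -/

import Mathlib

open MeasureTheory Set

lemma clarkson_aux (p a b : ℝ) (hp : 2 ≤ p) :
    |(a + b) / 2| ^ p + |(a - b) / 2| ^ p ≤ (|a| ^ p + |b| ^ p) / 2 := by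
  have hpow : ∀ x : ℝ, |x| ^ p = (x ^ 2) ^ (p / 2) := by
    intro x
    rw [← sq_abs, ← Real.rpow_natCast, ← Real.rpow_mul (abs_nonneg x)]
    congr 1
    push_cast
    ring
  have h1 : (1 : ℝ) ≤ p / 2 := by linarith
  simp only [hpow]
  have hA := Real.add_rpow_le_rpow_add (sq_nonneg ((a + b) / 2)) (sq_nonneg ((a - b) / 2)) h1
  have hB := (convexOn_rpow h1).2 (mem_Ici.2 (sq_nonneg a)) (mem_Ici.2 (sq_nonneg b))
    (by norm_num : (0 : ℝ) ≤ 1 / 2) (by norm_num : (0 : ℝ) ≤ 1 / 2) (by norm_num)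
  simp only [smul_eq_mul] at hB
  have e : ((a + b) / 2) ^ 2 + ((a - b) / 2) ^ 2 = 1 / 2 * a ^ 2 + 1 / 2 * b ^ 2 := by ring
  rw [e] at hA
  linarith

lemma step_aux (α β : ℝ) :
    IntegrableOn (fun t : ℝ => if t ≤ 1 / 2 then α else β) (Icc 0 1) ∧
    ∫ t in Icc (0 : ℝ) 1, (if t ≤ 1 / 2 then α else β) = (α + β) / 2 := by
  have hu : Icc (0 : ℝ) 1 = Icc 0 (1 / 2) ∪ Ioc (1 / 2) 1 :=
    (Icc_union_Ioc_eq_Icc (by norm_num) (by norm_num)).symm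
  have e1 : EqOn (fun _ : ℝ => α) (fun t : ℝ => if t ≤ 1 / 2 then α else β) (Icc 0 (1 / 2)) := by
    intro t ht
    exact (if_pos ht.2).symm
  have e2 : EqOn (fun _ : ℝ => β) (fun t : ℝ => if t ≤ 1 / 2 then α else β) (Ioc (1 / 2) 1) := by
    intro t ht
    exact (if_neg (not_le.2 ht.1)).symm
  have i1 : IntegrableOn (fun t : ℝ => if t ≤ 1 / 2 then α else β) (Icc 0 (1 / 2)) :=
    IntegrableOn.congr_fun (integrableOn_const (by simp)) e1 measurableSet_Icc
  have i2 : IntegrableOn (fun t : ℝ => if t ≤ 1 / 2 then α else β) (Ioc (1 / 2) 1) :=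
    IntegrableOn.congr_fun (integrableOn_const (by simp)) e2 measurableSet_Ioc
  refine ⟨hu ▸ i1.union i2, ?_⟩
  rw [hu, setIntegral_union _ measurableSet_Ioc i1 i2, ← setIntegral_congr_fun measurableSet_Icc e1,
    ← setIntegral_congr_fun measurableSet_Ioc e2]
  · simp
    rw [max_eq_left (by norm_num)]
    ring
  · rw [disjoint_left]
    intro t h h'
    exact absurd h.2 (not_le.2 h'.1)

/-- The modulus of uniform convexity of `L^p([0,1])` for `p ≥ 2` equals
`1 − (1 − (ε/2)^p)^{1/p}`. Here `‖h‖_p = (∫₀¹ |h|^p)^{1/p}`. -/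
theorem modulus_of_convexity_ge_two (p ε : ℝ) (hp : 2 ≤ p) (hε0 : 0 < ε) (hε2 : ε ≤ 2) :
    sInf {d : ℝ | ∃ f g : ℝ → ℝ, Measurable f ∧ Measurable g ∧
        IntegrableOn (fun t => |f t| ^ p) (Icc 0 1) ∧
        IntegrableOn (fun t => |g t| ^ p) (Icc 0 1) ∧
        (∫ t in Icc (0:ℝ) 1, |f t| ^ p) ^ (1/p) = 1 ∧
        (∫ t in Icc (0:ℝ) 1, |g t| ^ p) ^ (1/p) = 1 ∧
        ε ≤ (∫ t in Icc (0:ℝ) 1, |f t - g t| ^ p) ^ (1/p) ∧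
        d = 1 - (∫ t in Icc (0:ℝ) 1, |(f t + g t) / 2| ^ p) ^ (1/p)}
      = 1 - (1 - (ε/2) ^ p) ^ (1/p) := by
  have hp0 : 0 < p := by linarith
  have hpne : p ≠ 0 := hp0.ne'
  have hple : 0 ≤ 1 / p := by positivity
  have inv1 : ∀ x : ℝ, 0 ≤ x → (x ^ (1 / p)) ^ p = x := by
    intro x hx
    rw [one_div, Real.rpow_inv_rpow hx hpne]
  have inv2 : ∀ x : ℝ, 0 ≤ x → (x ^ p) ^ (1 / p) = x := by
    intro x hx
    rw [one_div, Real.rpow_rpow_inv hx hpne]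
  have hεp : (ε / 2) ^ p ≤ 1 := Real.rpow_le_one (by linarith) (by linarith) hp0.le
  apply IsLeast.csInf_eq
  constructor
  · set k : ℝ := 2 ^ (1 / p) with hk
    have hk0 : 0 ≤ k := by positivity
    have hkp : k ^ p = 2 := inv1 2 (by norm_num)
    set c : ℝ := (1 - (ε / 2) ^ p) ^ (1 / p) with hc
    have hc0 : 0 ≤ c := Real.rpow_nonneg (by linarith) _
    have hcp : c ^ p = 1 - (ε / 2) ^ p := inv1 _ (by linarith)
    have hmeas : ∀ α β : ℝ, Measurable (fun t : ℝ => if t ≤ 1 / 2 then α else β) := fun α β =>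
      Measurable.ite measurableSet_Iic measurable_const measurable_const
    have hv1 : |k * c| ^ p = 2 * (1 - (ε / 2) ^ p) := by
      rw [abs_of_nonneg (by positivity), Real.mul_rpow hk0 hc0, hkp, hcp]
    have hv2 : |k * (ε / 2)| ^ p = 2 * (ε / 2) ^ p := by
      rw [abs_of_nonneg (by positivity), Real.mul_rpow hk0 (by positivity), hkp]
    have hv3 : |k * ε| ^ p = 2 * ε ^ p := by
      rw [abs_of_nonneg (by positivity), Real.mul_rpow hk0 hε0.le, hkp]
    have hF : (fun t : ℝ => |if t ≤ 1 / 2 then k * c else k * (ε / 2)| ^ p) =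
        fun t : ℝ => if t ≤ 1 / 2 then 2 * (1 - (ε / 2) ^ p) else 2 * (ε / 2) ^ p := by
      funext t
      split_ifs
      · exact hv1
      · exact hv2
    have hG : (fun t : ℝ => |if t ≤ 1 / 2 then k * c else -(k * (ε / 2))| ^ p) =
        fun t : ℝ => if t ≤ 1 / 2 then 2 * (1 - (ε / 2) ^ p) else 2 * (ε / 2) ^ p := by
      funext t
      split_ifs
      · exact hv1
      · rw [abs_neg]; exact hv2
    refine ⟨fun t => if t ≤ 1 / 2 then k * c else k * (ε / 2),
      fun t => if t ≤ 1 / 2 then k * c else -(k * (ε / 2)), hmeas _ _, hmeas _ _, ?_, ?_, ?_, ?_,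
      ?_, ?_⟩
    · rw [hF]; exact (step_aux _ _).1
    · rw [hG]; exact (step_aux _ _).1
    · rw [hF, (step_aux _ _).2]
      ring_nf
      exact Real.one_rpow _
    · rw [hG, (step_aux _ _).2]
      ring_nf
      exact Real.one_rpow _
    · have hD : (fun t : ℝ => |(if t ≤ 1 / 2 then k * c else k * (ε / 2)) -
          (if t ≤ 1 / 2 then k * c else -(k * (ε / 2)))| ^ p) =
          fun t : ℝ => if t ≤ 1 / 2 then 0 else 2 * ε ^ p := by
        funext t
        split_ifs
        · rw [sub_self, abs_zero, Real.zero_rpow hpne]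
        · rw [← hv3]; congr 2; ring
      rw [hD, (step_aux _ _).2]
      have : (0 + 2 * ε ^ p) / 2 = ε ^ p := by ring
      rw [this, inv2 _ hε0.le]
    · have hD : (fun t : ℝ => |((if t ≤ 1 / 2 then k * c else k * (ε / 2)) +
          (if t ≤ 1 / 2 then k * c else -(k * (ε / 2)))) / 2| ^ p) =
          fun t : ℝ => if t ≤ 1 / 2 then 2 * (1 - (ε / 2) ^ p) else 0 := by
        funext t
        split_ifs
        · rw [← hv1]; congr 2; ring
        · rw [add_neg_cancel, zero_div, abs_zero, Real.zero_rpow hpne]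
      rw [hD, (step_aux _ _).2]
      have : (2 * (1 - (ε / 2) ^ p) + 0) / 2 = 1 - (ε / 2) ^ p := by ring
      rw [this]
  · rintro d ⟨f, g, hf, hg, hfi, hgi, hf1, hg1, hfg, rfl⟩
    have nn : ∀ h : ℝ → ℝ, 0 ≤ ∫ t in Icc (0 : ℝ) 1, |h t| ^ p := fun h =>
      integral_nonneg fun t => Real.rpow_nonneg (abs_nonneg _) _
    have hf2 : ∫ t in Icc (0 : ℝ) 1, |f t| ^ p = 1 := by
      rw [← inv1 _ (nn f), hf1, Real.one_rpow]
    have hg2 : ∫ t in Icc (0 : ℝ) 1, |g t| ^ p = 1 := by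
      rw [← inv1 _ (nn g), hg1, Real.one_rpow]
    have hR : IntegrableOn (fun t => (|f t| ^ p + |g t| ^ p) / 2) (Icc 0 1) :=
      (hfi.add hgi).div_const 2
    have mS : Measurable (fun t => |(f t + g t) / 2| ^ p) := by
      have : Measurable (fun t => |(f t + g t) / 2|) := by fun_prop
      exact this.pow_const p
    have hS : IntegrableOn (fun t => |(f t + g t) / 2| ^ p) (Icc 0 1) := by
      refine Integrable.mono' hR mS.aestronglyMeasurable (Filter.Eventually.of_forall fun t => ?_)
      have h0 : 0 ≤ |(f t - g t) / 2| ^ p := by positivity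
      rw [Real.norm_of_nonneg (by positivity)]
      linarith [clarkson_aux p (f t) (g t) hp]
    have mD : Measurable (fun t => |(f t - g t) / 2| ^ p) := by
      have : Measurable (fun t => |(f t - g t) / 2|) := by fun_prop
      exact this.pow_const p
    have hD : IntegrableOn (fun t => |(f t - g t) / 2| ^ p) (Icc 0 1) := by
      refine Integrable.mono' hR mD.aestronglyMeasurable (Filter.Eventually.of_forall fun t => ?_)
      have h0 : 0 ≤ |(f t + g t) / 2| ^ p := by positivity
      rw [Real.norm_of_nonneg (by positivity)]
      linarith [clarkson_aux p (f t) (g t) hp]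
    have hmain : (∫ t in Icc (0 : ℝ) 1, |(f t + g t) / 2| ^ p) +
        ∫ t in Icc (0 : ℝ) 1, |(f t - g t) / 2| ^ p ≤ 1 := by
      rw [← integral_add hS hD]
      refine (integral_mono (hS.add hD) hR fun t => clarkson_aux p (f t) (g t) hp).trans ?_
      rw [integral_div, integral_add hfi hgi, hf2, hg2]
      norm_num
    have hdiff : (ε / 2) ^ p ≤ ∫ t in Icc (0 : ℝ) 1, |(f t - g t) / 2| ^ p := by
      have e : ∀ t, |(f t - g t) / 2| ^ p = |f t - g t| ^ p / 2 ^ p := by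
        intro t
        rw [abs_div, abs_two, Real.div_rpow (abs_nonneg _) (by norm_num)]
      simp only [e]
      rw [integral_div, Real.div_rpow hε0.le (by norm_num)]
      gcongr
      rw [← inv1 _ (nn fun t => f t - g t)]
      exact Real.rpow_le_rpow hε0.le hfg hp0.le
    have := Real.rpow_le_rpow (nn fun t => (f t + g t) / 2)
      (show (∫ t in Icc (0 : ℝ) 1, |(f t + g t) / 2| ^ p) ≤ 1 - (ε / 2) ^ p by linarith) hple
    linarith
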